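/- Let p ≥ 2 and 2 ≤ k ≤ p−1 be integers, M > 0, h ≥ 1, R > 1; let ω ∈ C^∞(ℝ) satisfy |ω(ξ)| ≤ 1 for all ξ, ω(ξ) = 0 for |ξ| ≤ 1, and ω constant on each of {ξ ≥ R} and {ξ ≤ −R}; let ψ ∈ C₀^∞(ℝ) with 0 ≤ ψ ≤ 1, ψ(y) = 1 for |y| ≤ 1/2 and ψ(y) = 0 for |y| ≥ 1. Define λ_{p−k}(x,ξ) := M·ω(ξ/h)·⟨ξ⟩_h^{−k+1}·∫₀ˣ ⟨y⟩^{−(p−k)/(p−1)} ψ(⟨y⟩/⟨ξ⟩_h^{p−1}) dy. Then for all α, β ∈ ℕ there exists C_{α,β,k} > 0 (depending also on M, R, ω, ψ but not on h, x, ξ) such that, for either choice of sign, |∂_ξ^α ∂_x^β e^{±λ_{p−k}(x,ξ)}| ≤ C_{α,β,k}·⟨x⟩^{−β}·⟨ξ⟩_h^{−α}·e^{±λ_{p−k}(x,ξ)} for all x, ξ ∈ ℝ. -/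

import Mathlib

open MeasureTheory Real

noncomputable section

/-- The Japanese bracket `⟨x⟩ = (1 + x²)^(1/2)`. -/
def jb (x : ℝ) : ℝ := Real.sqrt (1 + x ^ 2)

/-- `⟨ξ⟩ₕ = (h² + ξ²)^(1/2)`. -/
def jbh (h ξ : ℝ) : ℝ := Real.sqrt (h ^ 2 + ξ ^ 2)

/-!
In the symbol class `S(g)` each derivative `∂_x`, `∂_ξ` gains a factor `⟨x⟩⁻¹`, `⟨ξ⟩ₕ⁻¹` over the
bound `g`. By the Leibniz and chain rules `e^λ ∈ S(e^λ)` as soon as `λ ∈ S(1)`. With `κ = p - 1` and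
`q = (p - k) / (p - 1)`, so that `κ(1 - q) = k - 1`, the phase `λ` is a product of
`ω(ξ/h) ∈ S(1)`, of `⟨ξ⟩ₕ^(-κ(1-q))`, and of an integral `∫₀ˣ ⟨y⟩^(-q) χ(⟨y⟩ / ⟨ξ⟩ₕ^κ) dy`.

This integral lies in `S(⟨ξ⟩ₕ^(κ(1-q)))`. The substitution `y = ⟨ξ⟩ₕ^κ v` gives its size, because
`q < 1`. Its `x`-derivative is `⟨x⟩^(-q) χ(⟨x⟩ / ⟨ξ⟩ₕ^κ)`, where the cutoff contributes
`(⟨x⟩ / ⟨ξ⟩ₕ^κ)^(-(1-q))`. Its `ξ`-derivative is the same integral for the cutoff `t χ'(t)`, times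
the logarithmic derivative of `⟨ξ⟩ₕ^(-κ)`.
-/

open Function

section Brackets

lemma jb_eq_jbh_one (x : ℝ) : jb x = jbh 1 x := by simp only [jb, jbh, one_pow]

lemma abs_le_jbh (h ξ : ℝ) : |ξ| ≤ jbh h ξ := Real.abs_le_sqrt (by nlinarith [sq_nonneg h])

lemma continuous_jbh (h : ℝ) : Continuous (jbh h) := by unfold jbh; fun_prop

lemma contDiff_jb {n : WithTop ℕ∞} : ContDiff ℝ n jb :=
  (contDiff_const.add (contDiff_id.pow 2)).sqrt fun x => by positivity

variable {h : ℝ} (hh : 0 < h)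
include hh

lemma jbh_pos (ξ : ℝ) : 0 < jbh h ξ := Real.sqrt_pos.2 (by positivity)

lemma continuous_jbh_rpow (m : ℝ) : Continuous fun y => jbh h y ^ m :=
  (continuous_jbh h).rpow_const fun y => .inl (jbh_pos hh y).ne'

lemma jbh_eq_mul_jb_div (ξ : ℝ) : jbh h ξ = h * jb (ξ / h) := by
  rw [jbh, jb, ← Real.sqrt_sq hh.le, ← Real.sqrt_mul (sq_nonneg _), Real.sqrt_sq hh.le]
  congr 1
  field_simp

lemma hasDerivAt_jbh_rpow (m ξ : ℝ) :
    HasDerivAt (fun t => jbh h t ^ m) (m * ξ * jbh h ξ ^ (m - 2)) ξ := by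
  have hpos : 0 < h ^ 2 + ξ ^ 2 := by positivity
  have hsq : HasDerivAt (fun t : ℝ => h ^ 2 + t ^ 2) (2 * ξ) ξ := by
    simpa using (hasDerivAt_pow 2 ξ).const_add (h ^ 2)
  have hsqrt : HasDerivAt (jbh h) (2 * ξ / (2 * jbh h ξ)) ξ := hsq.sqrt hpos.ne'
  have hw := jbh_pos hh ξ
  refine (hsqrt.rpow_const (p := m) (Or.inl hw.ne')).congr_deriv ?_
  rw [Real.rpow_sub_one hw.ne', Real.rpow_sub hw, Real.rpow_two]
  field_simp

end Brackets

section Symbols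

/-- Functions on `ℝ^D` depending on a vector of positive scales, one for each coordinate. All
symbol estimates below are uniform in the scales. -/
abbrev ScaledFamily (D : Type*) := (D → Set.Ioi (0 : ℝ)) → (D → ℝ) → ℝ

variable {D : Type*} {f f₁ f₂ f' g g₁ g₂ ρ₁ ρ₂ : ScaledFamily D} {d d' : D} {n : ℕ}

/-- The power `⟨z_d⟩_{s_d}^m` of the Japanese bracket of one coordinate. -/
def bracketPow (d : D) (m : ℝ) : ScaledFamily D := fun s z => jbh (s d) (z d) ^ m

lemma bracketPow_pos (d : D) (m : ℝ) (s : D → Set.Ioi (0 : ℝ)) (z : D → ℝ) :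
    0 < bracketPow d m s z :=
  Real.rpow_pos_of_pos (jbh_pos (s d).2 _) m

lemma bracketPow_mul_bracketPow (d : D) (a b : ℝ) :
    bracketPow d a * bracketPow d b = bracketPow d (a + b) :=
  funext₂ fun s z => (Real.rpow_add (jbh_pos (s d).2 (z d)) a b).symm

lemma bracketPow_zero (d : D) : bracketPow d 0 = 1 := funext₂ fun _ _ => Real.rpow_zero _

/-- Domination `|f| ≤ C g` with a constant uniform in the scales and in the point. -/
def BoundedBy (f g : ScaledFamily D) : Prop := ∃ C, ∀ s z, |f s z| ≤ C * g s z

lemma boundedBy_self_of_pos (hf : ∀ s z, 0 < f s z) : BoundedBy f f :=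
  ⟨1, fun s z => by rw [abs_of_pos (hf s z), one_mul]⟩

lemma boundedBy_zero (g : ScaledFamily D) : BoundedBy 0 g := ⟨0, fun s z => by simp⟩

lemma BoundedBy.add (h₁ : BoundedBy f₁ g) (h₂ : BoundedBy f₂ g) : BoundedBy (f₁ + f₂) g := by
  obtain ⟨C₁, h₁⟩ := h₁
  obtain ⟨C₂, h₂⟩ := h₂
  refine ⟨C₁ + C₂, fun s z => ?_⟩
  calc |f₁ s z + f₂ s z| ≤ |f₁ s z| + |f₂ s z| := abs_add_le _ _
    _ ≤ C₁ * g s z + C₂ * g s z := add_le_add (h₁ s z) (h₂ s z)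
    _ = (C₁ + C₂) * g s z := (add_mul _ _ _).symm

lemma BoundedBy.mul (h₁ : BoundedBy f₁ g₁) (h₂ : BoundedBy f₂ g₂) :
    BoundedBy (f₁ * f₂) (g₁ * g₂) := by
  obtain ⟨C₁, h₁⟩ := h₁
  obtain ⟨C₂, h₂⟩ := h₂
  refine ⟨C₁ * C₂, fun s z => ?_⟩
  calc |f₁ s z * f₂ s z| = |f₁ s z| * |f₂ s z| := abs_mul _ _
    _ ≤ (C₁ * g₁ s z) * (C₂ * g₂ s z) :=
      mul_le_mul (h₁ s z) (h₂ s z) (abs_nonneg _) ((abs_nonneg _).trans (h₁ s z))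
    _ = C₁ * C₂ * (g₁ s z * g₂ s z) := mul_mul_mul_comm _ _ _ _

variable [DecidableEq D]

/-- `f'` is the partial derivative of `f` with respect to the coordinate `d`. -/
def HasPartial (d : D) (f f' : ScaledFamily D) : Prop :=
  ∀ s z, HasDerivAt (fun t => f s (update z d t)) (f' s z) (z d)

lemma hasPartial_const (c : ℝ) : HasPartial d (fun _ _ => c) 0 :=
  fun _ z => hasDerivAt_const (z d) c

lemma HasPartial.add {f₁' f₂' : ScaledFamily D} (h₁ : HasPartial d f₁ f₁')
    (h₂ : HasPartial d f₂ f₂') : HasPartial d (f₁ + f₂) (f₁' + f₂') :=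
  fun s z => (h₁ s z).add (h₂ s z)

lemma HasPartial.mul {f₁' f₂' : ScaledFamily D} (h₁ : HasPartial d f₁ f₁')
    (h₂ : HasPartial d f₂ f₂') : HasPartial d (f₁ * f₂) (f₁' * f₂ + f₁ * f₂') := fun s z => by
  simpa only [Pi.mul_apply, Pi.add_apply, update_eq_self] using (h₁ s z).fun_mul (h₂ s z)

lemma HasPartial.comp {χ χ' : ℝ → ℝ} (hχ : ∀ t, HasDerivAt χ (χ' t) t)
    (hf : HasPartial d f f') :
    HasPartial d (fun s z => χ (f s z)) (fun s z => χ' (f s z) * f' s z) := fun s z => by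
  simpa only [update_eq_self, comp_def] using
    HasDerivAt.comp (z d) (hχ (f s (update z d (z d)))) (hf s z)

lemma HasPartial.of_coord {F F' : (D → Set.Ioi (0 : ℝ)) → ℝ → ℝ}
    (hF : ∀ s t, HasDerivAt (F s) (F' s t) t) (d : D) :
    HasPartial d (fun s z => F s (z d)) (fun s z => F' s (z d)) := fun s z => by
  simpa only [update_self] using hF s (z d)

lemma HasPartial.of_coord_of_ne (F : (D → Set.Ioi (0 : ℝ)) → ℝ → ℝ) (hd : d ≠ d') :
    HasPartial d' (fun s z => F s (z d)) 0 := fun s z => by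
  simpa only [update_of_ne hd, Pi.zero_apply] using hasDerivAt_const (z d') (F s (z d))

lemma HasPartial.deriv_update (hf : HasPartial d f f') (s : D → Set.Ioi (0 : ℝ)) (z : D → ℝ) :
    deriv (fun t => f s (update z d t)) = fun t => f' s (update z d t) := funext fun t => by
  simpa only [update_idem, update_self] using (hf s (update z d t)).deriv

/-- The symbol class of order `g`, truncated at `n` derivatives: each derivative with respect to
`z_d` exists and improves the bound by the factor `⟨z_d⟩_{s_d}⁻¹`. -/
def IsSymbol : ℕ → ScaledFamily D → ScaledFamily D → Prop
  | 0, f, g => BoundedBy f g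
  | n + 1, f, g =>
    BoundedBy f g ∧ ∀ d, ∃ f', HasPartial d f f' ∧ IsSymbol n f' (g * bracketPow d (-1))

namespace IsSymbol

lemma boundedBy : ∀ {n : ℕ} {f : ScaledFamily D}, IsSymbol n f g → BoundedBy f g
  | 0, _, hf => hf
  | _ + 1, _, hf => hf.1

lemma of_succ : ∀ {n : ℕ} {f g : ScaledFamily D}, IsSymbol (n + 1) f g → IsSymbol n f g
  | 0, _, _, hf => hf.1
  | _ + 1, _, _, hf => ⟨hf.1, fun d =>
    let ⟨f', hd, hf'⟩ := hf.2 d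
    ⟨f', hd, hf'.of_succ⟩⟩

lemma zero (n : ℕ) (g : ScaledFamily D) : IsSymbol n 0 g := by
  induction n generalizing g with
  | zero => exact boundedBy_zero g
  | succ n ih => exact ⟨boundedBy_zero g, fun d => ⟨0, hasPartial_const 0, ih _⟩⟩

lemma const (n : ℕ) (c : ℝ) : IsSymbol n (fun _ _ => c : ScaledFamily D) 1 := by
  have hc : BoundedBy (fun _ _ => c : ScaledFamily D) 1 := ⟨|c|, fun s z => by simp⟩
  cases n with
  | zero => exact hc
  | succ n => exact ⟨hc, fun d => ⟨0, hasPartial_const c, zero n _⟩⟩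

lemma add (h₁ : IsSymbol n f₁ g) (h₂ : IsSymbol n f₂ g) : IsSymbol n (f₁ + f₂) g := by
  induction n generalizing f₁ f₂ g with
  | zero => exact BoundedBy.add h₁ h₂
  | succ n ih =>
    refine ⟨h₁.1.add h₂.1, fun d => ?_⟩
    obtain ⟨f₁', hd₁, h₁'⟩ := h₁.2 d
    obtain ⟨f₂', hd₂, h₂'⟩ := h₂.2 d
    exact ⟨f₁' + f₂', hd₁.add hd₂, ih h₁' h₂'⟩

lemma mul (h₁ : IsSymbol n f₁ g₁) (h₂ : IsSymbol n f₂ g₂) :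
    IsSymbol n (f₁ * f₂) (g₁ * g₂) := by
  induction n generalizing f₁ f₂ g₁ g₂ with
  | zero => exact BoundedBy.mul h₁ h₂
  | succ n ih =>
    refine ⟨h₁.1.mul h₂.1, fun d => ?_⟩
    obtain ⟨f₁', hd₁, h₁'⟩ := h₁.2 d
    obtain ⟨f₂', hd₂, h₂'⟩ := h₂.2 d
    refine ⟨f₁' * f₂ + f₁ * f₂', hd₁.mul hd₂, add ?_ ?_⟩
    · simpa only [mul_right_comm] using ih h₁' h₂.of_succ
    · simpa only [mul_assoc] using ih h₁.of_succ h₂'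

lemma const_mul (c : ℝ) (hf : IsSymbol n f g) : IsSymbol n ((fun _ _ => c) * f) g := by
  simpa only [one_mul] using (const n c).mul hf

lemma succ_of_coord {F F' : (D → Set.Ioi (0 : ℝ)) → ℝ → ℝ}
    (hF : ∀ s t, HasDerivAt (F s) (F' s t) t)
    (hb : BoundedBy (fun s z => F s (z d)) g)
    (hF' : IsSymbol n (fun s z => F' s (z d)) (g * bracketPow d (-1))) :
    IsSymbol (n + 1) (fun s z => F s (z d)) g := by
  refine ⟨hb, fun d' => ?_⟩
  rcases eq_or_ne d d' with rfl | hd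
  · exact ⟨_, .of_coord hF d, hF'⟩
  · exact ⟨0, .of_coord_of_ne F hd, zero n _⟩

lemma exp (hf : IsSymbol n f 1) :
    IsSymbol n (fun s z => Real.exp (f s z)) (fun s z => Real.exp (f s z)) := by
  have hb : BoundedBy (fun s z => Real.exp (f s z)) (fun s z => Real.exp (f s z)) :=
    boundedBy_self_of_pos fun _ _ => Real.exp_pos _
  induction n with
  | zero => exact hb
  | succ n ih =>
    refine ⟨hb, fun d => ?_⟩
    obtain ⟨f', hd, hf'⟩ := hf.2 d
    rw [one_mul] at hf'
    exact ⟨_, hd.comp Real.hasDerivAt_exp, (ih hf.of_succ).mul hf'⟩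

lemma exists_iteratedDeriv_eq {m : ℕ} (hf : IsSymbol (n + m) f g) (d : D) :
    ∃ f', IsSymbol m f' (g * bracketPow d (-n)) ∧ ∀ s z t,
      iteratedDeriv n (fun r => f s (update z d r)) t = f' s (update z d t) := by
  induction n generalizing f g with
  | zero =>
    refine ⟨f, ?_, fun s z t => by rw [iteratedDeriv_zero]⟩
    simpa only [Nat.cast_zero, neg_zero, bracketPow_zero, mul_one, zero_add] using hf
  | succ n ih =>
    rw [Nat.add_right_comm] at hf
    obtain ⟨f', hd, hf'⟩ := hf.2 d
    obtain ⟨f'', hf'', heq⟩ := ih hf'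
    refine ⟨f'', ?_, fun s z t => by rw [iteratedDeriv_succ', hd.deriv_update, heq]⟩
    rw [mul_assoc, bracketPow_mul_bracketPow] at hf''
    convert hf'' using 3
    push_cast
    ring

end IsSymbol

lemma isSymbol_coord (d : D) (n : ℕ) : IsSymbol n (fun _ z => z d) (bracketPow d 1) := by
  have hb : BoundedBy (fun _ z => z d) (bracketPow d 1) := ⟨1, fun s z => by
    simpa only [bracketPow, Real.rpow_one, one_mul] using abs_le_jbh (s d) (z d)⟩
  cases n with
  | zero => exact hb
  | succ n =>
    refine .succ_of_coord (F := fun _ t => t) (fun _ t => hasDerivAt_id t) hb ?_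
    rw [bracketPow_mul_bracketPow, add_neg_cancel, bracketPow_zero]
    exact .const n 1

lemma isSymbol_bracketPow (d : D) (m : ℝ) (n : ℕ) :
    IsSymbol n (bracketPow d m) (bracketPow d m) := by
  induction n generalizing m with
  | zero => exact boundedBy_self_of_pos (bracketPow_pos d m)
  | succ n ih =>
    refine .succ_of_coord (F := fun s t => jbh (s d) t ^ m)
      (fun s t => hasDerivAt_jbh_rpow (s d).2 m t)
      (boundedBy_self_of_pos (bracketPow_pos d m)) ?_
    have hexp : m + -1 = 1 + (m - 2) := by ring
    rw [bracketPow_mul_bracketPow, hexp, ← bracketPow_mul_bracketPow]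
    exact ((isSymbol_coord d n).const_mul m).mul (ih (m - 2))

/-- A weight: a family whose logarithmic derivatives have order `⟨z_d⟩_{s_d}⁻¹`. -/
def IsWeight (ρ : ScaledFamily D) : Prop :=
  ∀ d, ∃ b, HasPartial d ρ (ρ * b) ∧ ∀ n, IsSymbol n b (bracketPow d (-1))

lemma IsWeight.mul (h₁ : IsWeight ρ₁) (h₂ : IsWeight ρ₂) : IsWeight (ρ₁ * ρ₂) := fun d => by
  obtain ⟨b₁, hd₁, hb₁⟩ := h₁ d
  obtain ⟨b₂, hd₂, hb₂⟩ := h₂ d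
  refine ⟨b₁ + b₂, ?_, fun n => (hb₁ n).add (hb₂ n)⟩
  convert hd₁.mul hd₂ using 1
  ring

/-- The logarithmic derivative `m z_d ⟨z_d⟩_{s_d}^(-2)` of `⟨z_d⟩_{s_d}^m` in `z_d`. -/
def logDerivBracketPow (d : D) (m : ℝ) : ScaledFamily D :=
  (fun _ _ => m) * ((fun _ z => z d) * bracketPow d (-2))

lemma hasPartial_bracketPow (d : D) (m : ℝ) :
    HasPartial d (bracketPow d m) (bracketPow d m * logDerivBracketPow d m) := by
  have heq : bracketPow d m * logDerivBracketPow d m =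
      fun s z => m * z d * jbh (s d) (z d) ^ (m - 2) := funext₂ fun s z => by
    simp only [logDerivBracketPow, bracketPow, Pi.mul_apply, sub_eq_add_neg,
      Real.rpow_add (jbh_pos (s d).2 (z d))]
    ring
  exact heq ▸ .of_coord (fun s t => hasDerivAt_jbh_rpow (s d).2 m t) d

lemma isSymbol_logDerivBracketPow (d : D) (m : ℝ) (n : ℕ) :
    IsSymbol n (logDerivBracketPow d m) (bracketPow d (-1)) := by
  have hexp : (-1 : ℝ) = 1 + -2 := by norm_num
  rw [hexp, ← bracketPow_mul_bracketPow]
  exact ((isSymbol_coord d n).mul (isSymbol_bracketPow d (-2) n)).const_mul m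

lemma isWeight_bracketPow (d : D) (m : ℝ) : IsWeight (bracketPow d m) := fun d' => by
  rcases eq_or_ne d d' with rfl | hd
  · exact ⟨_, hasPartial_bracketPow d m, isSymbol_logDerivBracketPow d m⟩
  · refine ⟨0, ?_, fun n => .zero n _⟩
    rw [mul_zero]
    exact .of_coord_of_ne (fun s t => jbh (s d) t ^ m) hd

lemma IsSymbol.exists_bound_iteratedDeriv {f g : ScaledFamily (Fin 2)} {m n : ℕ}
    (hf : IsSymbol (n + m) f g) : ∃ C, ∀ h₀ h₁ : Set.Ioi (0 : ℝ), ∀ x ξ,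
      |iteratedDeriv m (fun ξ => iteratedDeriv n (fun x => f ![h₀, h₁] ![x, ξ]) x) ξ| ≤
        C * (g ![h₀, h₁] ![x, ξ] * jbh h₀ x ^ (-n : ℝ) * jbh h₁ ξ ^ (-m : ℝ)) := by
  obtain ⟨f₁, hf₁, heq₁⟩ := hf.exists_iteratedDeriv_eq 0
  obtain ⟨f₂, hf₂, heq₂⟩ := IsSymbol.exists_iteratedDeriv_eq (m := 0) hf₁ 1
  obtain ⟨C, hC⟩ := hf₂.boundedBy
  refine ⟨C, fun h₀ h₁ x ξ => ?_⟩
  have hx : ∀ ξ r, update ![x, ξ] 0 r = ![r, ξ] := fun ξ r =>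
    funext (Fin.forall_fin_two.2 ⟨rfl, rfl⟩)
  have hξ : ∀ r, update ![x, ξ] 1 r = ![x, r] := fun r =>
    funext (Fin.forall_fin_two.2 ⟨rfl, rfl⟩)
  have heq_x : ∀ r, iteratedDeriv n (fun x => f ![h₀, h₁] ![x, r]) x = f₁ ![h₀, h₁] ![x, r] :=
    fun r => by simpa only [hx] using heq₁ ![h₀, h₁] ![x, r] x
  have heq_ξ : iteratedDeriv m (fun ξ => f₁ ![h₀, h₁] ![x, ξ]) ξ = f₂ ![h₀, h₁] ![x, ξ] := by
    simpa only [hξ] using heq₂ ![h₀, h₁] ![x, ξ] ξ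
  simp only [heq_x, heq_ξ]
  exact hC ![h₀, h₁] ![x, ξ]

end Symbols

section Cutoffs

open scoped ContDiff

variable {φ χ : ℝ → ℝ} {D : Type*}

lemma exists_bound_of_hasCompactSupport_deriv (hφ : ContDiff ℝ 1 φ)
    (hφ' : HasCompactSupport (deriv φ)) : ∃ C, ∀ t, |φ t| ≤ C := by
  have hcont : Continuous (deriv φ) := hφ.continuous_deriv le_rfl
  have hint : Integrable (deriv φ) := hcont.integrable_of_hasCompactSupport hφ'
  refine ⟨|φ 0| + ∫ u, |deriv φ u|, fun t => ?_⟩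
  have hftc : ∫ u in (0 : ℝ)..t, deriv φ u = φ t - φ 0 :=
    intervalIntegral.integral_deriv_eq_sub (fun u _ => hφ.differentiable one_ne_zero u)
      (hcont.intervalIntegrable _ _)
  have hle : |∫ u in (0 : ℝ)..t, deriv φ u| ≤ ∫ u, |deriv φ u| :=
    intervalIntegral.norm_integral_le_integral_norm_uIoc.trans
      (setIntegral_le_integral hint.norm (.of_forall fun _ => norm_nonneg _))
  calc |φ t| = |φ 0 + ∫ u in (0 : ℝ)..t, deriv φ u| := by rw [hftc, add_sub_cancel]
    _ ≤ |φ 0| + |∫ u in (0 : ℝ)..t, deriv φ u| := abs_add_le _ _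
    _ ≤ |φ 0| + ∫ u, |deriv φ u| := by gcongr

lemma hasCompactSupport_deriv_of_const_of_const {E : Type*} [NormedAddCommGroup E]
    [NormedSpace ℝ E] {φ : ℝ → E} {a b : ℝ} (hright : ∀ t₁ t₂, b ≤ t₁ → b ≤ t₂ → φ t₁ = φ t₂)
    (hleft : ∀ t₁ t₂, t₁ ≤ a → t₂ ≤ a → φ t₁ = φ t₂) : HasCompactSupport (deriv φ) := by
  refine .intro (isCompact_Icc (a := a) (b := b)) fun t ht => ?_
  have hconst : φ =ᶠ[nhds t] fun _ => φ t := by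
    rcases not_and_or.1 ht with ht | ht
    · filter_upwards [Iio_mem_nhds (not_le.1 ht)] with r hr
      exact hleft r t (le_of_lt hr) (not_le.1 ht).le
    · filter_upwards [Ioi_mem_nhds (not_le.1 ht)] with r hr
      exact hright r t (le_of_lt hr) (not_le.1 ht).le
  rw [hconst.deriv_eq, deriv_const]

lemma hasDerivAt_comp_div {h : ℝ} (hh : 0 < h) (hφ : Differentiable ℝ φ) (t : ℝ) :
    HasDerivAt (fun t => φ (t / h))
      (jb (t / h) * deriv φ (t / h) * jbh h t ^ (-1 : ℝ)) t := by
  have hw := jbh_pos one_pos (t / h)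
  refine ((hφ (t / h)).hasDerivAt.comp t ((hasDerivAt_id t).div_const h)).congr_deriv ?_
  rw [Real.rpow_neg_one, jbh_eq_mul_jb_div hh, jb_eq_jbh_one]
  field_simp

lemma boundedBy_comp_div_scale (hφ : ContDiff ℝ 1 φ) (hφ' : HasCompactSupport (deriv φ)) (d : D) :
    BoundedBy (fun s z => φ (z d / s d)) 1 := by
  obtain ⟨C, hC⟩ := exists_bound_of_hasCompactSupport_deriv hφ hφ'
  exact ⟨C, fun s z => by simpa only [Pi.one_apply, mul_one] using hC _⟩

variable [DecidableEq D]

lemma isSymbol_comp_div_scale (hφ : ContDiff ℝ ∞ φ) (hφ' : HasCompactSupport (deriv φ)) (d : D)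
    (n : ℕ) : IsSymbol n (fun s z => φ (z d / s d)) 1 := by
  induction n generalizing φ with
  | zero => exact boundedBy_comp_div_scale (hφ.of_le (by simp)) hφ' d
  | succ n ih =>
    exact .succ_of_coord
      (fun s t => hasDerivAt_comp_div (s d).2 (hφ.differentiable (by simp)) t)
      (boundedBy_comp_div_scale (hφ.of_le (by simp)) hφ' d)
      ((ih (φ := fun t => jb t * deriv φ t) (contDiff_jb.mul (contDiff_infty_iff_deriv.1 hφ).2)
        hφ'.mul_left.deriv).mul (isSymbol_bracketPow d (-1) n))

/-- The operator `t d/dt`, which describes how a cutoff `χ ∘ ρ` is differentiated in terms of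
the logarithmic derivative of `ρ`. -/
def eulerDeriv (χ : ℝ → ℝ) (t : ℝ) : ℝ := t * deriv χ t

lemma contDiff_eulerDeriv (hχ : ContDiff ℝ ∞ χ) : ContDiff ℝ ∞ (eulerDeriv χ) :=
  contDiff_id.mul (contDiff_infty_iff_deriv.1 hχ).2

lemma hasCompactSupport_eulerDeriv (hχ : HasCompactSupport χ) :
    HasCompactSupport (eulerDeriv χ) := hχ.deriv.mul_left

lemma exists_abs_le_mul_rpow_neg (hχ : Continuous χ) (hc : HasCompactSupport χ) {r : ℝ}
    (hr : 0 ≤ r) : ∃ C, ∀ t, 0 < t → |χ t| ≤ C * t ^ (-r) := by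
  have hcont : Continuous fun t : ℝ => t ^ r * χ t :=
    (continuous_id.rpow_const fun _ => .inr hr).mul hχ
  obtain ⟨C, hC⟩ := hc.mul_left.exists_bound_of_continuous hcont
  refine ⟨C, fun t ht => ?_⟩
  rw [Real.rpow_neg ht.le, ← div_eq_mul_inv, le_div_iff₀' (Real.rpow_pos_of_pos ht r)]
  simpa only [Pi.mul_apply, norm_mul, Real.norm_eq_abs,
    abs_of_pos (Real.rpow_pos_of_pos ht r)] using hC t

lemma IsWeight.isSymbol_comp {ρ : ScaledFamily D} (hρ : IsWeight ρ) (hpos : ∀ s z, 0 < ρ s z)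
    (hχ : ContDiff ℝ ∞ χ) (hc : HasCompactSupport χ) {r : ℝ} (hr : 0 ≤ r) (n : ℕ) :
    IsSymbol n (fun s z => χ (ρ s z)) (fun s z => ρ s z ^ (-r)) := by
  have hb : ∀ χ : ℝ → ℝ, ContDiff ℝ ∞ χ → HasCompactSupport χ →
      BoundedBy (fun s z => χ (ρ s z)) (fun s z => ρ s z ^ (-r)) := fun χ hχ hc =>
    let ⟨C, hC⟩ := exists_abs_le_mul_rpow_neg hχ.continuous hc hr
    ⟨C, fun s z => hC _ (hpos s z)⟩
  induction n generalizing χ with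
  | zero => exact hb χ hχ hc
  | succ n ih =>
    refine ⟨hb χ hχ hc, fun d => ?_⟩
    obtain ⟨b, hd, hbs⟩ := hρ d
    refine ⟨(fun s z => eulerDeriv χ (ρ s z)) * b, ?_,
      (ih (contDiff_eulerDeriv hχ) (hasCompactSupport_eulerDeriv hc)).mul (hbs n)⟩
    convert hd.comp fun t => (hχ.differentiable (by simp) t).hasDerivAt using 1
    funext s z
    simp only [eulerDeriv, Pi.mul_apply]
    ring

end Cutoffs

section Primitive

open scoped ContDiff

variable {χ : ℝ → ℝ}

lemma hasDerivAt_integral_mul_comp_mul {g a : ℝ → ℝ} (hg : Continuous g) (ha : Continuous a)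
    (hχ : ContDiff ℝ 1 χ) (hχ' : HasCompactSupport (deriv χ)) (x u : ℝ) :
    HasDerivAt (fun u => ∫ y in (0 : ℝ)..x, g y * χ (a y * u))
      (∫ y in (0 : ℝ)..x, g y * (a y * deriv χ (a y * u))) u := by
  have hcont : Continuous (deriv χ) := hχ.continuous_deriv le_rfl
  obtain ⟨C, hC⟩ := hχ'.exists_bound_of_continuous hcont
  have hF : ∀ u, Continuous fun y => g y * χ (a y * u) := fun u =>
    hg.mul (hχ.continuous.comp (ha.mul continuous_const))
  refine (intervalIntegral.hasDerivAt_integral_of_dominated_loc_of_deriv_le (s := Set.univ)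
    (bound := fun y => ‖g y‖ * (‖a y‖ * C)) (F' := fun u y => g y * (a y * deriv χ (a y * u)))
    Filter.univ_mem ?_ ?_ ?_ ?_ ?_ ?_).2
  · exact .of_forall fun u => (hF u).aestronglyMeasurable
  · exact (hF u).intervalIntegrable _ _
  · exact Continuous.aestronglyMeasurable (by fun_prop)
  · refine .of_forall fun y _ u _ => ?_
    rw [norm_mul, norm_mul]
    gcongr
    exact hC _
  · exact Continuous.intervalIntegrable (by fun_prop) _ _
  · refine .of_forall fun y _ u _ => ?_
    have hcomp := (hχ.differentiable one_ne_zero (a y * u)).hasDerivAt.comp u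
      ((hasDerivAt_id u).const_mul (a y))
    refine (hcomp.const_mul (g y)).congr_deriv ?_
    ring

lemma integrable_exp_neg_abs_mul_abs_rpow {r : ℝ} (hr : r < 1) :
    Integrable fun v : ℝ => Real.exp (-|v|) * |v| ^ (-r) := by
  have hΓ := Real.GammaIntegral_convergent (sub_pos.2 hr)
  refine (integrable_fun_norm_addHaar (volume : Measure ℝ)
    (f := fun t => Real.exp (-t) * t ^ (-r))).2 ?_
  simpa only [Module.finrank_self, tsub_self, pow_zero, one_smul, sub_sub_cancel_left] using hΓ

lemma norm_intervalIntegral_le_of_le_comp_mul {E : Type*} [NormedAddCommGroup E]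
    [NormedSpace ℝ E] {F : ℝ → E} {K : ℝ → ℝ} (hK : Integrable K) {u : ℝ} (hu : 0 < u)
    (hF : ∀ᵐ y, ‖F y‖ ≤ K (y * u)) (a b : ℝ) : ‖∫ y in a..b, F y‖ ≤ u⁻¹ * ∫ v, K v := by
  have hKu : Integrable fun y => K (y * u) := hK.comp_mul_right' hu.ne'
  have hnonneg : 0 ≤ᵐ[volume] fun y => K (y * u) := hF.mono fun _ hy => (norm_nonneg _).trans hy
  calc ‖∫ y in a..b, F y‖ ≤ ∫ y in Set.uIoc a b, ‖F y‖ :=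
        intervalIntegral.norm_integral_le_integral_norm_uIoc
    _ ≤ ∫ y in Set.uIoc a b, K (y * u) :=
        integral_mono_of_nonneg (.of_forall fun _ => norm_nonneg _) hKu.integrableOn
          (ae_restrict_of_ae hF)
    _ ≤ ∫ y, K (y * u) := setIntegral_le_integral hKu hnonneg
    _ = u⁻¹ * ∫ v, K v := by
        rw [Measure.integral_comp_mul_right, abs_of_pos (inv_pos.2 hu), smul_eq_mul]

lemma exists_abs_rpow_mul_le_exp (hχ : Continuous χ) (hc : HasCompactSupport χ) {q r : ℝ}
    (hqr : q ≤ r) :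
    ∃ C, 0 ≤ C ∧ ∀ t, 0 < t → |t ^ (-q) * χ t| ≤ C * (Real.exp (-t) * t ^ (-r)) := by
  obtain ⟨C, hC⟩ := exists_abs_le_mul_rpow_neg (χ := fun t => Real.exp t * χ t)
    (Real.continuous_exp.mul hχ) hc.mul_left (sub_nonneg.2 hqr)
  have hC₁ := hC 1 one_pos
  rw [Real.one_rpow, mul_one] at hC₁
  refine ⟨C, (abs_nonneg _).trans hC₁, fun t ht => ?_⟩
  have hexp : -r = -(r - q) + -q := by ring
  calc |t ^ (-q) * χ t| = |Real.exp t * χ t| * (Real.exp (-t) * t ^ (-q)) := by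
        rw [abs_mul, abs_mul, Real.abs_exp, abs_of_pos (Real.rpow_pos_of_pos ht _),
          mul_mul_mul_comm, ← Real.exp_add, add_neg_cancel, Real.exp_zero, one_mul, mul_comm]
    _ ≤ C * t ^ (-(r - q)) * (Real.exp (-t) * t ^ (-q)) := by
        have := hC t ht
        gcongr
    _ = C * (Real.exp (-t) * t ^ (-r)) := by
        rw [hexp, Real.rpow_add ht]
        ring

/- With `t = ⟨y⟩u` the integrand is `u^q t^(-q) χ(t)`. Since `t ≥ |y|u` it is dominated
by `u^q K(|y|u)` with the decreasing integrable profile `K(v) = C exp(-v) v^(-max q 0)`. -/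
lemma exists_abs_integral_jbh_rpow_mul_le (hχ : Continuous χ) (hc : HasCompactSupport χ) {q : ℝ}
    (hq : q < 1) : ∃ C, ∀ h, 0 < h → ∀ u, 0 < u → ∀ x,
      |∫ y in (0 : ℝ)..x, jbh h y ^ (-q) * χ (jbh h y * u)| ≤ C * u ^ (q - 1) := by
  obtain ⟨C, hC₀, hC⟩ := exists_abs_rpow_mul_le_exp hχ hc (le_max_left q 0)
  have hK := integrable_exp_neg_abs_mul_abs_rpow (max_lt hq one_pos)
  refine ⟨C * ∫ v : ℝ, Real.exp (-|v|) * |v| ^ (-max q 0), fun h hh u hu x => ?_⟩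
  have hF : ∀ᵐ y : ℝ, |jbh h y ^ (-q) * χ (jbh h y * u)| ≤
      u ^ q * (C * (Real.exp (-|y * u|) * |y * u| ^ (-max q 0))) := by
    filter_upwards [Measure.ae_ne volume 0] with y hy
    have hw := jbh_pos hh y
    have hle : |y * u| ≤ jbh h y * u := by
      rw [abs_mul, abs_of_pos hu]
      exact mul_le_mul_of_nonneg_right (abs_le_jbh h y) hu.le
    calc |jbh h y ^ (-q) * χ (jbh h y * u)|
        = u ^ q * |(jbh h y * u) ^ (-q) * χ (jbh h y * u)| := by
          rw [abs_mul, abs_mul, Real.mul_rpow hw.le hu.le, abs_mul, Real.rpow_neg hu.le,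
            abs_inv, abs_of_pos (Real.rpow_pos_of_pos hu q)]
          field_simp [(Real.rpow_pos_of_pos hu q).ne']
      _ ≤ u ^ q * (C * (Real.exp (-(jbh h y * u)) * (jbh h y * u) ^ (-max q 0))) := by
          have := hC _ (mul_pos hw hu)
          gcongr
      _ ≤ u ^ q * (C * (Real.exp (-|y * u|) * |y * u| ^ (-max q 0))) := by
          have := Real.rpow_le_rpow_of_nonpos (abs_pos.2 (mul_ne_zero hy hu.ne')) hle
            (neg_nonpos.2 (le_max_right q 0))
          gcongr
  rw [← Real.norm_eq_abs]
  refine (norm_intervalIntegral_le_of_le_comp_mul ((hK.const_mul C).const_mul (u ^ q)) hu hF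
    0 x).trans_eq ?_
  rw [integral_const_mul, integral_const_mul, Real.rpow_sub_one hu.ne']
  ring

/-- The argument `⟨x⟩ / ⟨ξ⟩^κ` of the cutoff, in the coordinates `z = (x, ξ)`. -/
def cutoffScale (κ : ℝ) : ScaledFamily (Fin 2) := bracketPow 0 1 * bracketPow 1 (-κ)

lemma cutoffScale_pos (κ : ℝ) (s : Fin 2 → Set.Ioi (0 : ℝ)) (z : Fin 2 → ℝ) :
    0 < cutoffScale κ s z :=
  mul_pos (bracketPow_pos _ _ s z) (bracketPow_pos _ _ s z)

lemma cutoffScale_rpow (κ r : ℝ) :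
    (fun s z => cutoffScale κ s z ^ r) = bracketPow 0 r * bracketPow 1 (-κ * r) :=
  funext₂ fun s z => by
    have h₀ := bracketPow_pos 0 1 s z
    have h₁ := bracketPow_pos 1 (-κ) s z
    simp only [cutoffScale, Pi.mul_apply, Real.mul_rpow h₀.le h₁.le]
    simp only [bracketPow, Real.rpow_one, Real.rpow_mul (jbh_pos (s 1).2 (z 1)).le]

lemma isWeight_cutoffScale (κ : ℝ) : IsWeight (cutoffScale κ) :=
  (isWeight_bracketPow 0 1).mul (isWeight_bracketPow 1 (-κ))

/-- The primitive `∫₀ˣ ⟨y⟩^(-q) χ(⟨y⟩ / ⟨ξ⟩^κ) dy` as a family in the coordinates `z = (x, ξ)`. -/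
def primitive (κ q : ℝ) (χ : ℝ → ℝ) : ScaledFamily (Fin 2) := fun s z =>
  ∫ y in (0 : ℝ)..z 0, jbh (s 0) y ^ (-q) * χ (jbh (s 0) y * jbh (s 1) (z 1) ^ (-κ))

lemma hasPartial_primitive_zero (κ q : ℝ) (hχ : Continuous χ) :
    HasPartial 0 (primitive κ q χ)
      (bracketPow 0 (-q) * fun s z => χ (cutoffScale κ s z)) := fun s z => by
  have hcont : Continuous fun y =>
      jbh (s 0) y ^ (-q) * χ (jbh (s 0) y * jbh (s 1) (z 1) ^ (-κ)) :=
    (continuous_jbh_rpow (s 0).2 (-q)).mul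
      (hχ.comp ((continuous_jbh (s 0)).mul continuous_const))
  simpa only [primitive, cutoffScale, bracketPow, Pi.mul_apply, Real.rpow_one, update_self,
    update_of_ne one_ne_zero] using (hcont.integral_hasStrictDerivAt 0 (z 0)).hasDerivAt

lemma hasPartial_primitive_one (κ q : ℝ) (hχ : ContDiff ℝ 1 χ)
    (hχ' : HasCompactSupport (deriv χ)) :
    HasPartial 1 (primitive κ q χ)
      (primitive κ q (eulerDeriv χ) * logDerivBracketPow 1 (-κ)) := fun s z => by
  set b := logDerivBracketPow 1 (-κ) s z
  set u := jbh (s 1) (z 1) ^ (-κ)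
  have hu : HasDerivAt (fun t => jbh (s 1) t ^ (-κ)) (u * b) (z 1) := by
    simpa only [bracketPow, Pi.mul_apply, update_self] using hasPartial_bracketPow 1 (-κ) s z
  have hint := (hasDerivAt_integral_mul_comp_mul (continuous_jbh_rpow (s 0).2 (-q))
    (continuous_jbh (s 0)) hχ hχ' (z 0) u).comp (z 1) hu
  simp only [primitive, update_self, update_of_ne zero_ne_one, Pi.mul_apply]
  refine hint.congr_deriv ?_
  rw [← mul_assoc, ← intervalIntegral.integral_mul_const]
  simp only [eulerDeriv]
  congr 2 with y
  ring

lemma boundedBy_primitive (κ : ℝ) {q : ℝ} (hq : q < 1) (hχ : Continuous χ)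
    (hc : HasCompactSupport χ) :
    BoundedBy (primitive κ q χ) (bracketPow 1 (κ * (1 - q))) := by
  obtain ⟨C, hC⟩ := exists_abs_integral_jbh_rpow_mul_le hχ hc hq
  refine ⟨C, fun s z => ?_⟩
  have hw := jbh_pos (s 1).2 (z 1)
  have hexp : κ * (1 - q) = -κ * (q - 1) := by ring
  rw [bracketPow, hexp, Real.rpow_mul hw.le]
  exact hC _ (s 0).2 _ (Real.rpow_pos_of_pos hw _) _

lemma isSymbol_primitive (κ : ℝ) {q : ℝ} (hq : q < 1) (hχ : ContDiff ℝ ∞ χ)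
    (hc : HasCompactSupport χ) (n : ℕ) :
    IsSymbol n (primitive κ q χ) (bracketPow 1 (κ * (1 - q))) := by
  induction n generalizing χ with
  | zero => exact boundedBy_primitive κ hq hχ.continuous hc
  | succ n ih =>
    refine ⟨boundedBy_primitive κ hq hχ.continuous hc, Fin.forall_fin_two.2 ⟨?_, ?_⟩⟩
    · refine ⟨_, hasPartial_primitive_zero κ q hχ.continuous, ?_⟩
      have hweight : bracketPow 0 (-q) * (fun s z => cutoffScale κ s z ^ (-(1 - q))) =
          bracketPow 1 (κ * (1 - q)) * bracketPow 0 (-1) := by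
        rw [cutoffScale_rpow, ← mul_assoc, bracketPow_mul_bracketPow, mul_comm]
        congr 2 <;> ring
      rw [← hweight]
      exact (isSymbol_bracketPow 0 (-q) n).mul ((isWeight_cutoffScale κ).isSymbol_comp
        (cutoffScale_pos κ) hχ hc (sub_nonneg.2 hq.le) n)
    · exact ⟨_, hasPartial_primitive_one κ q (hχ.of_le (by simp)) hc.deriv,
        (ih (contDiff_eulerDeriv hχ) (hasCompactSupport_eulerDeriv hc)).mul
          (isSymbol_logDerivBracketPow 1 (-κ) n)⟩

end Primitive

section Phase

open scoped ContDiff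

variable {q : ℝ} {φ χ : ℝ → ℝ}

/-- The phase `λ = c φ(ξ/h) ⟨ξ⟩^(-κ(1-q)) ∫₀ˣ ⟨y⟩^(-q) χ(⟨y⟩ / ⟨ξ⟩^κ) dy` in the coordinates
`z = (x, ξ)`; the paper has `κ = p - 1` and `q = (p - k) / (p - 1)`, so that `κ(1-q) = k - 1`. -/
def phase (κ q c : ℝ) (φ χ : ℝ → ℝ) : ScaledFamily (Fin 2) :=
  (fun _ _ => c) *
    ((fun s z => φ (z 1 / s 1)) * bracketPow 1 (-(κ * (1 - q))) * primitive κ q χ)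

lemma isSymbol_phase (κ c : ℝ) (hq : q < 1) (hφ : ContDiff ℝ ∞ φ)
    (hφ' : HasCompactSupport (deriv φ)) (hχ : ContDiff ℝ ∞ χ) (hc : HasCompactSupport χ) (n : ℕ) :
    IsSymbol n (phase κ q c φ χ) 1 := by
  have h := (((isSymbol_comp_div_scale hφ hφ' 1 n).mul
    (isSymbol_bracketPow 1 (-(κ * (1 - q))) n)).mul (isSymbol_primitive κ hq hχ hc n)).const_mul c
  rwa [one_mul, bracketPow_mul_bracketPow, neg_add_cancel, bracketPow_zero] at h

lemma exists_bound_iteratedDeriv_exp_phase (κ c : ℝ) (hq : q < 1)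
    (hφ : ContDiff ℝ ∞ φ) (hφ' : HasCompactSupport (deriv φ)) (hχ : ContDiff ℝ ∞ χ)
    (hc : HasCompactSupport χ) (m n : ℕ) : ∃ C, ∀ h : ℝ, 0 < h → ∀ x ξ,
      |iteratedDeriv m (fun ξ => iteratedDeriv n (fun x =>
        Real.exp (c * (φ (ξ / h) * jbh h ξ ^ (-(κ * (1 - q))) *
          ∫ y in (0 : ℝ)..x, jb y ^ (-q) * χ (jb y / jbh h ξ ^ κ)))) x) ξ| ≤
        C * jb x ^ (-n : ℝ) * jbh h ξ ^ (-m : ℝ) *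
          Real.exp (c * (φ (ξ / h) * jbh h ξ ^ (-(κ * (1 - q))) *
            ∫ y in (0 : ℝ)..x, jb y ^ (-q) * χ (jb y / jbh h ξ ^ κ))) := by
  obtain ⟨C, hC⟩ := (isSymbol_phase κ c hq hφ hφ' hχ hc (n + m)).exp.exists_bound_iteratedDeriv
  refine ⟨C, fun h hh x ξ => ?_⟩
  have hphase : ∀ x ξ, phase κ q c φ χ ![⟨1, Set.mem_Ioi.2 one_pos⟩, ⟨h, hh⟩] ![x, ξ] =
      c * (φ (ξ / h) * jbh h ξ ^ (-(κ * (1 - q))) *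
        ∫ y in (0 : ℝ)..x, jb y ^ (-q) * χ (jb y / jbh h ξ ^ κ)) := fun x ξ => by
    simp only [phase, primitive, bracketPow, jb_eq_jbh_one, div_eq_mul_inv,
      Real.rpow_neg (jbh_pos hh ξ).le κ, Pi.mul_apply, Matrix.cons_val_zero, Matrix.cons_val_one]
  have hbound := hC ⟨1, Set.mem_Ioi.2 one_pos⟩ ⟨h, hh⟩ x ξ
  simp only [hphase, ← jb_eq_jbh_one] at hbound
  refine hbound.trans_eq ?_
  ring

end Phase

theorem stmt8_general {p k : ℝ} (hp : 1 < p) (hk : 1 < k) (M : ℝ) {ω ψ : ℝ → ℝ}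
    (hω : ContDiff ℝ (⊤ : ℕ∞) ω) (hω' : HasCompactSupport (deriv ω)) (hψ : ContDiff ℝ (⊤ : ℕ∞) ψ)
    (hψc : HasCompactSupport ψ) (α β : ℕ) : ∃ C > 0, ∀ h : ℝ, 0 < h → ∀ x ξ : ℝ,
      ∀ s : ℝ, s = 1 ∨ s = -1 →
        |iteratedDeriv α
            (fun ξ' => iteratedDeriv β
              (fun x' => Real.exp
                (s * (M * ω (ξ' / h) * jbh h ξ' ^ (-k + 1) *
                  ∫ y in (0:ℝ)..x',
                    jb y ^ (-((p - k) / (p - 1))) * ψ (jb y / jbh h ξ' ^ (p - 1))))) x) ξ| ≤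
          C * jb x ^ (-(β : ℝ)) * jbh h ξ ^ (-(α : ℝ)) *
            Real.exp (s * (M * ω (ξ / h) * jbh h ξ ^ (-k + 1) *
              ∫ y in (0:ℝ)..x,
                jb y ^ (-((p - k) / (p - 1))) * ψ (jb y / jbh h ξ ^ (p - 1)))) := by
  have hp₁ : 0 < p - 1 := sub_pos.2 hp
  have hq : (p - k) / (p - 1) < 1 := (div_lt_one hp₁).2 (by linarith)
  have hexp : -((p - 1) * (1 - (p - k) / (p - 1))) = -k + 1 := by
    field_simp
    ring
  have hbound := fun c => exists_bound_iteratedDeriv_exp_phase (p - 1) c hq hω hω' hψ hψc α β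
  simp only [hexp] at hbound
  obtain ⟨C₁, hpos⟩ := hbound M
  obtain ⟨C₂, hneg⟩ := hbound (-M)
  refine ⟨max 1 (max C₁ C₂), lt_max_of_lt_left one_pos, fun h hh x ξ s hs => ?_⟩
  have hb := (Real.rpow_pos_of_pos (jbh_pos one_pos x) (-β : ℝ)).le
  have ha := (Real.rpow_pos_of_pos (jbh_pos hh ξ) (-α : ℝ)).le
  rw [← jb_eq_jbh_one] at hb
  rcases hs with rfl | rfl
  · simp only [one_mul, mul_assoc] at hpos ⊢
    refine (hpos h hh x ξ).trans ?_
    gcongr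
    exact (le_max_left _ _).trans (le_max_right _ _)
  · simp only [neg_mul, one_mul, mul_assoc] at hneg ⊢
    refine (hneg h hh x ξ).trans ?_
    gcongr
    exact (le_max_right _ _).trans (le_max_right _ _)

/-- estimates for `∂_ξ^α ∂_x^β e^{±λ_{p-k}(x,ξ)}`, where
`λ_{p-k}(x,ξ) = M·ω(ξ/h)·⟨ξ⟩ₕ^{-k+1}·∫₀ˣ ⟨y⟩^{-(p-k)/(p-1)} ψ(⟨y⟩/⟨ξ⟩ₕ^{p-1}) dy`;
the constant may depend on `α, β, k, M, R, ω, ψ` but not on `h, x, ξ`. -/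
theorem stmt8 (p k : ℕ) (hp : 2 ≤ p) (hk2 : 2 ≤ k) (hkp : k ≤ p - 1)
    (M R : ℝ) (hM : 0 < M) (hR : 1 < R)
    (ω : ℝ → ℝ) (hω : ContDiff ℝ (⊤ : ℕ∞) ω) (hωb : ∀ ξ : ℝ, |ω ξ| ≤ 1)
    (hω0 : ∀ ξ : ℝ, |ξ| ≤ 1 → ω ξ = 0)
    (hωcp : ∀ ξ₁ ξ₂ : ℝ, R ≤ ξ₁ → R ≤ ξ₂ → ω ξ₁ = ω ξ₂)
    (hωcm : ∀ ξ₁ ξ₂ : ℝ, ξ₁ ≤ -R → ξ₂ ≤ -R → ω ξ₁ = ω ξ₂)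
    (ψ : ℝ → ℝ) (hψ : ContDiff ℝ (⊤ : ℕ∞) ψ) (hψc : HasCompactSupport ψ)
    (hψ01 : ∀ y : ℝ, 0 ≤ ψ y ∧ ψ y ≤ 1)
    (hψ1 : ∀ y : ℝ, |y| ≤ 1 / 2 → ψ y = 1)
    (hψ0 : ∀ y : ℝ, 1 ≤ |y| → ψ y = 0) :
    ∀ α β : ℕ, ∃ C > 0, ∀ h : ℝ, 1 ≤ h → ∀ x ξ : ℝ,
      ∀ s : ℝ, s = 1 ∨ s = -1 →
        |iteratedDeriv α
            (fun ξ' => iteratedDeriv β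
              (fun x' => Real.exp
                (s * (M * ω (ξ' / h) * jbh h ξ' ^ (-(k : ℝ) + 1) *
                  ∫ y in (0:ℝ)..x',
                    jb y ^ (-(((p : ℝ) - k) / ((p : ℝ) - 1))) *
                      ψ (jb y / jbh h ξ' ^ ((p : ℝ) - 1))))) x) ξ| ≤
          C * jb x ^ (-(β : ℝ)) * jbh h ξ ^ (-(α : ℝ)) *
            Real.exp (s * (M * ω (ξ / h) * jbh h ξ ^ (-(k : ℝ) + 1) *
              ∫ y in (0:ℝ)..x,
                jb y ^ (-(((p : ℝ) - k) / ((p : ℝ) - 1))) *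
                  ψ (jb y / jbh h ξ ^ ((p : ℝ) - 1)))) := by
  intro α β
  obtain ⟨C, hC₀, hC⟩ := stmt8_general (Nat.one_lt_cast.2 hp) (Nat.one_lt_cast.2 hk2) M hω
    (hasCompactSupport_deriv_of_const_of_const hωcp hωcm) hψ hψc α β
  exact ⟨C, hC₀, fun h hh => hC h (one_pos.trans_le hh)⟩
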